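/- arXiv:2410.17986 — 2 statements merged into one kernel-verified Lean document; each statement's English description precedes it below -/
import Mathlib

section
/- Let Δ > 0, σ > 0, ε ≥ 0, and δ ∈ [0,1], and let Φ(t) = (1/√(2π)) ∫_{−∞}^t e^{−x²/2} dx be the cumulative distribution function of the standard Gaussian on ℝ. Suppose Φ(Δ/(2σ) − εσ/Δ) − e^ε · Φ(−Δ/(2σ) − εσ/Δ) ≤ δ. Then for any real numbers x₀, x₁ with |x₀ − x₁| ≤ Δ, the Gaussian measures μ = N(x₀, σ²) and ν = N(x₁, σ²) on ℝ satisfy the (ε, δ)-DP inequality: for every Borel set O ⊆ ℝ, μ(O) ≤ e^ε · ν(O) + δ. -/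
/-!
By an affine change of variables (with a reflection if `x₁ < x₀`), the two measures become
`N(0, 1)` and `N(a, 1)` with `a = |x₀ - x₁| / σ ≤ c = Δ / σ`. By the Neyman–Pearson argument,
`N(0, 1) A - e^ε N(a, 1) A` is largest over measurable `A` when `A` is the set where the density
difference is nonnegative, which for `a > 0` is the half-line `Iic τ_a`, `τ_a = a / 2 - ε / a`
(`neyman_pearson_gaussian`, `density_diff_nonneg_iff`). On half-lines the quantity
is `F(a, τ) = Φ(τ) - e^ε Φ(τ - a)`, which increases with `a`, so
`F(a, τ_a) ≤ F(c, τ_a) ≤ F(c, τ_c) ≤ δ`: the second inequality is Neyman–Pearson again, and no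
differentiation of the optimal value in `a` is needed. The case `a = 0` follows from
`ε, δ ≥ 0`.
-/

open MeasureTheory ProbabilityTheory

/-- The cumulative distribution function of the standard Gaussian on `ℝ`:
`Φ(t) = (1/√(2π)) ∫_{−∞}^t e^{−x²/2} dx`. -/
noncomputable def stdGaussianCDF (t : ℝ) : ℝ :=
  (1 / Real.sqrt (2 * Real.pi)) * ∫ x in Set.Iic t, Real.exp (-x ^ 2 / 2)

lemma stdGaussianCDF_eq (t : ℝ) :
    stdGaussianCDF t = (gaussianReal 0 1).real (Set.Iic t) := by
  rw [measureReal_def, gaussianReal_apply_eq_integral _ one_ne_zero,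
    ENNReal.toReal_ofReal (integral_nonneg fun x => gaussianPDFReal_nonneg _ _ _),
    stdGaussianCDF, ← integral_const_mul]
  simp [gaussianPDFReal]

lemma stdGaussianCDF_sub (t a : ℝ) :
    stdGaussianCDF (t - a) = (gaussianReal a 1).real (Set.Iic t) := by
  rw [stdGaussianCDF_eq]
  have h := gaussianReal_map_add_const (μ := 0) (v := 1) a
  rw [zero_add] at h
  rw [← h, map_measureReal_apply (by fun_prop) measurableSet_Iic]
  congr 1
  ext x
  simp [le_sub_iff_add_le]

lemma stdGaussianCDF_mono : Monotone stdGaussianCDF := fun s t h => by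
  rw [stdGaussianCDF_eq, stdGaussianCDF_eq]
  exact measureReal_mono (Set.Iic_subset_Iic.2 h)

lemma density_diff_nonneg_iff (ε : ℝ) {a : ℝ} (ha : 0 < a) (x : ℝ) :
    0 ≤ gaussianPDFReal 0 1 x - Real.exp ε * gaussianPDFReal a 1 x ↔ x ≤ a / 2 - ε / a := by
  have h2 : 0 < (Real.sqrt (2 * Real.pi))⁻¹ := by positivity
  have h3 : x ≤ a / 2 - ε / a ↔ x * a ≤ a ^ 2 / 2 - ε := by
    rw [show a / 2 - ε / a = (a ^ 2 / 2 - ε) / a by field_simp, le_div_iff₀ ha]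
  simp only [gaussianPDFReal, NNReal.coe_one, mul_one]
  rw [sub_nonneg, mul_left_comm, mul_le_mul_iff_right₀ h2, ← Real.exp_add, Real.exp_le_exp, h3]
  constructor <;> intro h <;> nlinarith

/-- Neyman–Pearson for two unit-variance Gaussians: among measurable sets, the half-line on which
the likelihood ratio is at least `e^ε` maximises `N(0, 1) A - e^ε N(a, 1) A`. -/
lemma neyman_pearson_gaussian (ε : ℝ) {a : ℝ} (ha : 0 < a) {A : Set ℝ} (hA : MeasurableSet A) :
    (gaussianReal 0 1).real A - Real.exp ε * (gaussianReal a 1).real A ≤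
      stdGaussianCDF (a / 2 - ε / a) - Real.exp ε * stdGaussianCDF (a / 2 - ε / a - a) := by
  have key (B : Set ℝ) :
      (gaussianReal 0 1).real B - Real.exp ε * (gaussianReal a 1).real B =
        ∫ x in B, (gaussianPDFReal 0 1 x - Real.exp ε * gaussianPDFReal a 1 x) := by
    rw [integral_sub (integrable_gaussianPDFReal _ _).integrableOn
      ((integrable_gaussianPDFReal _ _).const_mul _).integrableOn, integral_const_mul]
    simp only [measureReal_def, gaussianReal_apply_eq_integral _ one_ne_zero]
    rw [ENNReal.toReal_ofReal (integral_nonneg fun x => gaussianPDFReal_nonneg _ _ _),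
      ENNReal.toReal_ofReal (integral_nonneg fun x => gaussianPDFReal_nonneg _ _ _)]
  have hset : {x | 0 ≤ gaussianPDFReal 0 1 x - Real.exp ε * gaussianPDFReal a 1 x} =
      Set.Iic (a / 2 - ε / a) := Set.ext fun x => density_diff_nonneg_iff ε ha x
  rw [stdGaussianCDF_sub _ a, stdGaussianCDF_eq, key, key, ← hset]
  refine setIntegral_le_nonneg hA ?_ ?_
  · exact ((measurable_gaussianPDFReal 0 1).sub
      ((measurable_gaussianPDFReal a 1).const_mul _)).stronglyMeasurable
  · exact (integrable_gaussianPDFReal _ _).sub ((integrable_gaussianPDFReal _ _).const_mul _)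

/-- The mechanism inequality for unit variance and a shift `a` at most the normalized
sensitivity `c`: the half-line optimal for `a` is compared with the one optimal for `c`. -/
lemma normalized_bound {ε δ a c : ℝ} (hε : 0 ≤ ε) (hδ : 0 ≤ δ) (ha : 0 ≤ a) (hac : a ≤ c)
    (hc : 0 < c)
    (hcond : stdGaussianCDF (c / 2 - ε / c) -
      Real.exp ε * stdGaussianCDF (c / 2 - ε / c - c) ≤ δ)
    {A : Set ℝ} (hA : MeasurableSet A) :
    (gaussianReal 0 1).real A ≤ Real.exp ε * (gaussianReal a 1).real A + δ := by
  rcases ha.eq_or_lt with rfl | ha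
  · have h1 : 1 ≤ Real.exp ε := Real.one_le_exp hε
    have h2 : 0 ≤ (gaussianReal 0 1).real A := measureReal_nonneg
    nlinarith
  · have h1 := neyman_pearson_gaussian ε ha hA
    set τ := a / 2 - ε / a
    have h2 := neyman_pearson_gaussian ε hc (measurableSet_Iic (a := τ))
    rw [← stdGaussianCDF_eq, ← stdGaussianCDF_sub] at h2
    have h3 : Real.exp ε * stdGaussianCDF (τ - c) ≤ Real.exp ε * stdGaussianCDF (τ - a) :=
      mul_le_mul_of_nonneg_left (stdGaussianCDF_mono (by linarith)) (Real.exp_pos ε).le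
    linarith

lemma gaussianReal_eq_map_affine (m κ x : ℝ) :
    gaussianReal (κ * m + x) ((κ ^ 2).toNNReal) =
      (gaussianReal m 1).map (fun y => κ * y + x) := by
  have h : (fun y : ℝ => κ * y + x) = (fun y => y + x) ∘ fun y => κ * y := rfl
  rw [h, ← Measure.map_map (by fun_prop) (by fun_prop), gaussianReal_map_const_mul,
    gaussianReal_map_add_const]
  congr 1
  ext
  simp [sq_nonneg]

/-- One-dimensional Analytic Gaussian Mechanism (Balle–Wang): if
`Φ(Δ/(2σ) − εσ/Δ) − e^ε·Φ(−Δ/(2σ) − εσ/Δ) ≤ δ`, then for any `x₀, x₁` with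
`|x₀ − x₁| ≤ Δ`, the Gaussian measures `N(x₀, σ²)` and `N(x₁, σ²)` satisfy the
`(ε, δ)`-DP inequality. -/
theorem analytic_gaussian_mechanism (Δ σ ε δ : ℝ) (hΔ : 0 < Δ) (hσ : 0 < σ)
    (hε : 0 ≤ ε) (hδ : δ ∈ Set.Icc (0 : ℝ) 1)
    (hcond : stdGaussianCDF (Δ / (2 * σ) - ε * σ / Δ) -
      Real.exp ε * stdGaussianCDF (-(Δ / (2 * σ)) - ε * σ / Δ) ≤ δ)
    (x₀ x₁ : ℝ) (hx : |x₀ - x₁| ≤ Δ) :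
    ∀ O : Set ℝ, MeasurableSet O →
      gaussianReal x₀ ((σ ^ 2).toNNReal) O ≤
        ENNReal.ofReal (Real.exp ε) * gaussianReal x₁ ((σ ^ 2).toNNReal) O +
          ENNReal.ofReal δ := by
  intro O hO
  -- The sign of `κ` reflects the line if necessary, so that the shift `a` is nonnegative.
  obtain ⟨κ, hκ, hκx⟩ : ∃ κ : ℝ, κ ^ 2 = σ ^ 2 ∧ κ * (|x₀ - x₁| / σ) + x₀ = x₁ := by
    rcases le_total x₀ x₁ with h | h
    · refine ⟨σ, rfl, ?_⟩
      rw [abs_of_nonpos (by linarith)]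
      field_simp
      ring
    · refine ⟨-σ, by ring, ?_⟩
      rw [abs_of_nonneg (by linarith)]
      field_simp
      ring
  have hf : Measurable fun y : ℝ => κ * y + x₀ := by fun_prop
  have e0 := gaussianReal_eq_map_affine 0 κ x₀
  have e1 := gaussianReal_eq_map_affine (|x₀ - x₁| / σ) κ x₀
  rw [mul_zero, zero_add, hκ] at e0
  rw [hκx, hκ] at e1
  have hτ : Δ / σ / 2 - ε / (Δ / σ) = Δ / (2 * σ) - ε * σ / Δ := by
    field_simp
  have hτ' : Δ / σ / 2 - ε / (Δ / σ) - Δ / σ = -(Δ / (2 * σ)) - ε * σ / Δ := by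
    field_simp
    ring
  rw [← hτ', ← hτ] at hcond
  have key := normalized_bound hε hδ.1 (by positivity)
    (div_le_div_of_nonneg_right hx hσ.le) (by positivity) hcond (hf hO)
  rw [e0, e1, Measure.map_apply hf hO, Measure.map_apply hf hO,
    ← ofReal_measureReal, ← ofReal_measureReal,
    ← ENNReal.ofReal_mul (Real.exp_pos ε).le, ← ENNReal.ofReal_add (by positivity) hδ.1]
  exact ENNReal.ofReal_le_ofReal key
end

section
/- Let μ₁, ν₁ be probability measures on a measurable space X₁ and μ₂, ν₂ be probability measures on a measurable space X₂. Suppose that for every measurable O₁ ⊆ X₁, μ₁(O₁) ≤ e^{ε₁} · ν₁(O₁) + δ₁, and for every measurable O₂ ⊆ X₂, μ₂(O₂) ≤ e^{ε₂} · ν₂(O₂) + δ₂, where ε₁, ε₂, δ₁, δ₂ ≥ 0. Then the product measures satisfy, for every measurable set O ⊆ X₁ × X₂, (μ₁ ⊗ μ₂)(O) ≤ e^{ε₁ + ε₂} · (ν₁ ⊗ ν₂)(O) + δ₁ + δ₂. -/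
/-! Slice `O` along the first coordinate and integrate the slice measures by Tonelli. Applying the
bound for `μ₂, ν₂` to each slice and then integrating `e^ε₂ ν₂(O_x) + δ₂` naively would fail, because
the first DP inequality only transfers to integrands bounded by `1` and `e^ε₂ ν₂(O_x)` may exceed it.
Since `μ₂(O_x) ≤ 1`, however, also `μ₂(O_x) ≤ min (e^ε₂ ν₂(O_x)) 1 + δ₂`. The truncated integrand is
`[0, 1]`-valued, so `lintegral_le_of_dp`, the functional form of the DP inequality, finishes the proof.
-/

open MeasureTheory

/-- A setwise bound `μ ≤ ρ + δ` extends from indicators to all `[0, 1]`-valued test functions.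
On a Hahn decomposition, the part where `μ ≤ ρ` is immediate; on the part where `ρ ≤ μ`, comparing
the integrals of `1 - g` reduces the claim to the setwise bound for that part. -/
theorem lintegral_le_of_dp {X : Type*} [MeasurableSpace X] (μ ρ : Measure X)
    [IsFiniteMeasure μ] [IsFiniteMeasure ρ] (δ : ENNReal)
    (h : ∀ s, MeasurableSet s → μ s ≤ ρ s + δ)
    (g : X → ENNReal) (hg : Measurable g) (hg1 : ∀ x, g x ≤ 1) :
    ∫⁻ x, g x ∂μ ≤ ∫⁻ x, g x ∂ρ + δ := by
  obtain ⟨s, hs⟩ := exists_isHahnDecomposition μ ρ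
  have hsm := hs.measurableSet
  have split (m : Measure X) : ∫⁻ x in sᶜ, g x ∂m + ∫⁻ x in sᶜ, (1 - g x) ∂m = m sᶜ := by
    rw [← lintegral_add_left hg]
    simp [add_tsub_cancel_of_le (hg1 _)]
  have hpos : ∫⁻ x in s, g x ∂μ ≤ ∫⁻ x in s, g x ∂ρ :=
    lintegral_mono' hs.le_on le_rfl
  have hneg : ∫⁻ x in sᶜ, (1 - g x) ∂ρ ≤ ∫⁻ x in sᶜ, (1 - g x) ∂μ :=
    lintegral_mono' hs.ge_on_compl le_rfl
  have hfin : ∫⁻ x in sᶜ, (1 - g x) ∂ρ ≠ ⊤ :=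
    ne_top_of_le_ne_top (measure_ne_top ρ sᶜ) (le_add_self.trans (split ρ).le)
  have hcompl : ∫⁻ x in sᶜ, g x ∂μ ≤ ∫⁻ x in sᶜ, g x ∂ρ + δ := by
    refine ENNReal.le_of_add_le_add_right hfin ?_
    calc ∫⁻ x in sᶜ, g x ∂μ + ∫⁻ x in sᶜ, (1 - g x) ∂ρ
        ≤ ∫⁻ x in sᶜ, g x ∂μ + ∫⁻ x in sᶜ, (1 - g x) ∂μ := by gcongr
      _ = μ sᶜ := split μ
      _ ≤ ρ sᶜ + δ := h _ hsm.compl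
      _ = ∫⁻ x in sᶜ, g x ∂ρ + δ + ∫⁻ x in sᶜ, (1 - g x) ∂ρ := by
        rw [← split ρ, add_right_comm]
  rw [← lintegral_add_compl g hsm, ← lintegral_add_compl (μ := ρ) g hsm, add_assoc]
  exact add_le_add hpos hcompl

/-- Basic sequential composition of differential privacy: if `μ₁, ν₁` satisfy the
`(ε₁, δ₁)`-DP inequality and `μ₂, ν₂` satisfy the `(ε₂, δ₂)`-DP inequality, then the
product measures `μ₁ ⊗ μ₂` and `ν₁ ⊗ ν₂` satisfy the `(ε₁ + ε₂, δ₁ + δ₂)`-DP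
inequality. -/
theorem dp_composition {X₁ X₂ : Type*} [MeasurableSpace X₁] [MeasurableSpace X₂]
    (μ₁ ν₁ : Measure X₁) (μ₂ ν₂ : Measure X₂)
    [IsProbabilityMeasure μ₁] [IsProbabilityMeasure ν₁]
    [IsProbabilityMeasure μ₂] [IsProbabilityMeasure ν₂]
    (ε₁ ε₂ δ₁ δ₂ : ℝ) (hε₁ : 0 ≤ ε₁) (hε₂ : 0 ≤ ε₂) (hδ₁ : 0 ≤ δ₁) (hδ₂ : 0 ≤ δ₂)
    (hDP₁ : ∀ O₁ : Set X₁, MeasurableSet O₁ →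
      μ₁ O₁ ≤ ENNReal.ofReal (Real.exp ε₁) * ν₁ O₁ + ENNReal.ofReal δ₁)
    (hDP₂ : ∀ O₂ : Set X₂, MeasurableSet O₂ →
      μ₂ O₂ ≤ ENNReal.ofReal (Real.exp ε₂) * ν₂ O₂ + ENNReal.ofReal δ₂) :
    ∀ O : Set (X₁ × X₂), MeasurableSet O →
      (μ₁.prod μ₂) O ≤ ENNReal.ofReal (Real.exp (ε₁ + ε₂)) * (ν₁.prod ν₂) O +
        (ENNReal.ofReal δ₁ + ENNReal.ofReal δ₂) := by
  intro O hO
  have hν₂ : Measurable fun x => ν₂ (Prod.mk x ⁻¹' O) := measurable_measure_prodMk_left hO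
  set c₁ := ENNReal.ofReal (Real.exp ε₁)
  set c₂ := ENNReal.ofReal (Real.exp ε₂)
  have hc : ENNReal.ofReal (Real.exp (ε₁ + ε₂)) = c₁ * c₂ := by
    rw [Real.exp_add, ENNReal.ofReal_mul (Real.exp_pos _).le]
  have : IsFiniteMeasure (c₁ • ν₁) := ν₁.smul_finite ENNReal.ofReal_ne_top
  rw [Measure.prod_apply hO, Measure.prod_apply hO, hc]
  calc ∫⁻ x, μ₂ (Prod.mk x ⁻¹' O) ∂μ₁
      ≤ ∫⁻ x, (min (c₂ * ν₂ (Prod.mk x ⁻¹' O)) 1 + ENNReal.ofReal δ₂) ∂μ₁ := by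
        refine lintegral_mono fun x => ?_
        rw [← min_add_add_right]
        exact le_min (hDP₂ _ (measurable_prodMk_left hO)) (prob_le_one.trans le_self_add)
    _ = ∫⁻ x, min (c₂ * ν₂ (Prod.mk x ⁻¹' O)) 1 ∂μ₁ + ENNReal.ofReal δ₂ := by
        rw [lintegral_add_right _ measurable_const]; simp
    _ ≤ ∫⁻ x, min (c₂ * ν₂ (Prod.mk x ⁻¹' O)) 1 ∂(c₁ • ν₁) + ENNReal.ofReal δ₁
          + ENNReal.ofReal δ₂ := by
        gcongr
        exact lintegral_le_of_dp _ _ _ (by simpa using hDP₁) _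
          ((hν₂.const_mul _).min measurable_const) fun x => min_le_right _ _
    _ ≤ ∫⁻ x, c₂ * ν₂ (Prod.mk x ⁻¹' O) ∂(c₁ • ν₁) + ENNReal.ofReal δ₁
          + ENNReal.ofReal δ₂ := by
        gcongr
        exact min_le_left _ _
    _ = c₁ * c₂ * ∫⁻ x, ν₂ (Prod.mk x ⁻¹' O) ∂ν₁ +
          (ENNReal.ofReal δ₁ + ENNReal.ofReal δ₂) := by
        rw [lintegral_smul_measure, lintegral_const_mul _ hν₂, smul_eq_mul, mul_assoc, add_assoc]
end
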